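/- arXiv:1707.02782 — 2 statements merged into one kernel-verified Lean document; each statement's English description precedes it below -/
import Mathlib

section
/- For every integer j ≥ 1, the normal trace of the face basis function φ_{0j} := ∇ × (N₀ v_{2j}) on the bottom face of the reference tetrahedron satisfies the identity (φ_{0j}(x,y,0)) · (0,0,−1) = p̂_j^3(2y−1) − (1−y) p_{j−1}^3(2y−1) for all (x,y) with 0 < y < 1 and |x| < 1−y. -/
open MeasureTheory

/-- Jacobi polynomial with parameters `(α, 0)`, via the Rodrigues formula. -/
noncomputable def jacobiP (α : ℝ) (n : ℕ) (x : ℝ) : ℝ :=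
  1 / (2 ^ n * (n.factorial : ℝ) * (1 - x) ^ α) *
    iteratedDeriv n (fun t : ℝ => (1 - t) ^ α * (t ^ 2 - 1) ^ n) x

/-- Integrated Jacobi polynomial `p̂_n^α`. -/
noncomputable def jacobiPhat (α : ℝ) (n : ℕ) (x : ℝ) : ℝ :=
  if n = 0 then 1 else ∫ ξ in (-1 : ℝ)..x, jacobiP α (n - 1) ξ

/-- Partial derivative in the first coordinate. -/
noncomputable def pdx (f : ℝ × ℝ × ℝ → ℝ) (p : ℝ × ℝ × ℝ) : ℝ :=
  deriv (fun x => f (x, p.2.1, p.2.2)) p.1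

/-- Partial derivative in the second coordinate. -/
noncomputable def pdy (f : ℝ × ℝ × ℝ → ℝ) (p : ℝ × ℝ × ℝ) : ℝ :=
  deriv (fun y => f (p.1, y, p.2.2)) p.2.1

/-- Partial derivative in the third coordinate. -/
noncomputable def pdz (f : ℝ × ℝ × ℝ → ℝ) (p : ℝ × ℝ × ℝ) : ℝ :=
  deriv (fun z => f (p.1, p.2.1, z)) p.2.2

/-- Curl of a vector field on `ℝ³`. -/
noncomputable def curl3 (v : ℝ × ℝ × ℝ → ℝ × ℝ × ℝ) (p : ℝ × ℝ × ℝ) : ℝ × ℝ × ℝ :=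
  (pdy (fun q => (v q).2.2) p - pdz (fun q => (v q).2.1) p,
   pdz (fun q => (v q).1) p - pdx (fun q => (v q).2.2) p,
   pdx (fun q => (v q).2.1) p - pdy (fun q => (v q).1) p)

/-- Euclidean dot product on `ℝ³`. -/
noncomputable def dot3 (a b : ℝ × ℝ × ℝ) : ℝ :=
  a.1 * b.1 + a.2.1 * b.2.1 + a.2.2 * b.2.2

/-- The lowest-order Nédélec field `N₀ = (1/2)(y+z-1, -x, -x)` for the edge from
`(-1,0,0)` to `(1,0,0)`. -/
noncomputable def nedelec0 (p : ℝ × ℝ × ℝ) : ℝ × ℝ × ℝ :=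
  ((p.2.1 + p.2.2 - 1) / 2, -p.1 / 2, -p.1 / 2)

/-- The scalar field `v_{ij}(x,y,z) = p̂_j^{2i-1}((2y+z-1)/(1-z)) (1-z)^j`. -/
noncomputable def vFun (i j : ℕ) (p : ℝ × ℝ × ℝ) : ℝ :=
  jacobiPhat (2 * (i : ℝ) - 1) j ((2 * p.2.1 + p.2.2 - 1) / (1 - p.2.2)) * (1 - p.2.2) ^ j

/-- The face basis function `φ_{0j} = ∇ × (N₀ v_{2j})` (for `j ≥ 1`). -/
noncomputable def phiFace0 (j : ℕ) (p : ℝ × ℝ × ℝ) : ℝ × ℝ × ℝ :=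
  curl3 (fun q => vFun 2 j q • nedelec0 q) p

/-!
The third component of `∇ × (v N)` is `v (∇ × N)₃ + (∂v/∂x) N₂ - (∂v/∂y) N₁`. Here
`∇ × N₀ = (0, 1, -1)`, the function `v` does not depend on `x`, and `∂v/∂y` is given by the
fundamental theorem of calculus, as `p̂_{n+1}^α` is a primitive of `p_n^α`. For `z < 1`, the
argument `(2y + z - 1)/(1 - z)` stays below `1`, the only singularity of the Rodrigues formula,
exactly when `y + z < 1`.
-/

section Jacobi

variable (α : ℝ) (n : ℕ)

lemma continuousOn_jacobiP : ContinuousOn (jacobiP α n) (Set.Iio 1) := by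
  have base_ne_zero : ∀ t ∈ Set.Iio (1 : ℝ), 1 - t ≠ 0 := fun t ht => (sub_pos.2 ht).ne'
  have contDiffOn_base : ContDiffOn ℝ n (fun t : ℝ => (1 - t) ^ α) (Set.Iio 1) :=
    ContDiffOn.rpow_const_of_ne (by fun_prop) base_ne_zero
  have continuousOn_iteratedDeriv : ContinuousOn
      (iteratedDeriv n fun t : ℝ => (1 - t) ^ α * (t ^ 2 - 1) ^ n) (Set.Iio 1) :=
    ((contDiffOn_base.mul (by fun_prop)).continuousOn_iteratedDerivWithin le_rfl
      isOpen_Iio.uniqueDiffOn).congr (iteratedDerivWithin_of_isOpen isOpen_Iio).symm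
  refine (continuousOn_const.div (continuousOn_const.mul contDiffOn_base.continuousOn)
    fun t ht => ?_).mul continuousOn_iteratedDeriv
  have rpow_pos : 0 < (1 - t) ^ α := Real.rpow_pos_of_pos (sub_pos.2 ht) α
  exact mul_ne_zero (by positivity) rpow_pos.ne'

lemma jacobiPhat_succ (x : ℝ) :
    jacobiPhat α (n + 1) x = ∫ ξ in (-1 : ℝ)..x, jacobiP α n ξ := by
  simp [jacobiPhat]

lemma hasDerivAt_jacobiPhat_succ {x : ℝ} (hx : x < 1) :
    HasDerivAt (jacobiPhat α (n + 1)) (jacobiP α n x) x := by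
  have continuousOn_Iio := continuousOn_jacobiP α n
  have uIcc_subset : Set.uIcc (-1) x ⊆ Set.Iio 1 :=
    Set.ordConnected_Iio.uIcc_subset (by norm_num) hx
  rw [funext (jacobiPhat_succ α n)]
  exact intervalIntegral.integral_hasDerivAt_right
    (continuousOn_Iio.mono uIcc_subset).intervalIntegrable
    (continuousOn_Iio.stronglyMeasurableAtFilter isOpen_Iio x hx)
    (continuousOn_Iio.continuousAt (Iio_mem_nhds hx))

end Jacobi

section ProductRule

variable {f g : ℝ × ℝ × ℝ → ℝ} {u : ℝ × ℝ × ℝ → ℝ × ℝ × ℝ} {p : ℝ × ℝ × ℝ}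

lemma pdx_mul (hf : DifferentiableAt ℝ f p) (hg : DifferentiableAt ℝ g p) :
    pdx (fun q => f q * g q) p = pdx f p * g p + f p * pdx g p :=
  deriv_fun_mul (hf.comp p.1 (f := fun x => (x, p.2.1, p.2.2)) (by fun_prop))
    (hg.comp p.1 (f := fun x => (x, p.2.1, p.2.2)) (by fun_prop))

lemma pdy_mul (hf : DifferentiableAt ℝ f p) (hg : DifferentiableAt ℝ g p) :
    pdy (fun q => f q * g q) p = pdy f p * g p + f p * pdy g p :=
  deriv_fun_mul (hf.comp p.2.1 (f := fun y => (p.1, y, p.2.2)) (by fun_prop))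
    (hg.comp p.2.1 (f := fun y => (p.1, y, p.2.2)) (by fun_prop))

lemma pdz_mul (hf : DifferentiableAt ℝ f p) (hg : DifferentiableAt ℝ g p) :
    pdz (fun q => f q * g q) p = pdz f p * g p + f p * pdz g p :=
  deriv_fun_mul (hf.comp p.2.2 (f := fun z => (p.1, p.2.1, z)) (by fun_prop))
    (hg.comp p.2.2 (f := fun z => (p.1, p.2.1, z)) (by fun_prop))

lemma curl3_smul (hf : DifferentiableAt ℝ f p) (hu : DifferentiableAt ℝ u p) :
    curl3 (fun q => f q • u q) p = f p • curl3 u p +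
      (pdy f p * (u p).2.2 - pdz f p * (u p).2.1,
       pdz f p * (u p).1 - pdx f p * (u p).2.2,
       pdx f p * (u p).2.1 - pdy f p * (u p).1) := by
  have hu₁ : DifferentiableAt ℝ (fun q => (u q).1) p := hu.fst
  have hu₂ : DifferentiableAt ℝ (fun q => (u q).2.1) p := hu.snd.fst
  have hu₃ : DifferentiableAt ℝ (fun q => (u q).2.2) p := hu.snd.snd
  simp only [curl3, Prod.smul_fst, Prod.smul_snd, smul_eq_mul, pdx_mul hf hu₂, pdx_mul hf hu₃,
    pdy_mul hf hu₁, pdy_mul hf hu₃, pdz_mul hf hu₁, pdz_mul hf hu₂]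
  ext <;> simp <;> ring

end ProductRule

lemma differentiable_nedelec0 : Differentiable ℝ nedelec0 := by
  unfold nedelec0
  fun_prop

lemma curl3_nedelec0 (p : ℝ × ℝ × ℝ) : curl3 nedelec0 p = (0, 1, -1) := by
  ext <;> norm_num [curl3, nedelec0, pdx, pdy, pdz]

section VFun

variable (i n j : ℕ) {x y z : ℝ}

lemma two_mul_add_sub_one_div_lt_one (hz : z < 1) (hyz : y + z < 1) :
    (2 * y + z - 1) / (1 - z) < 1 := by
  rw [div_lt_one (by linarith)]
  linarith

lemma differentiableAt_vFun_succ (hz : z < 1) (hyz : y + z < 1) :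
    DifferentiableAt ℝ (vFun i (n + 1)) (x, y, z) := by
  have hz₀ : 1 - z ≠ 0 := (sub_pos.2 hz).ne'
  have differentiableAt_arg : DifferentiableAt ℝ
      (fun p : ℝ × ℝ × ℝ => (2 * p.2.1 + p.2.2 - 1) / (1 - p.2.2)) (x, y, z) := by
    fun_prop (disch := exact hz₀)
  have differentiableAt_jacobiPhat := (hasDerivAt_jacobiPhat_succ (2 * (i : ℝ) - 1) n
    (two_mul_add_sub_one_div_lt_one hz hyz)).differentiableAt
  exact (differentiableAt_jacobiPhat.comp (x, y, z) differentiableAt_arg).mul (by fun_prop)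

lemma pdx_vFun (p : ℝ × ℝ × ℝ) : pdx (vFun i j) p = 0 := by
  simp [pdx, vFun]

lemma pdy_vFun_succ (hz : z < 1) (hyz : y + z < 1) :
    pdy (vFun i (n + 1)) (x, y, z) =
      2 * (1 - z) ^ n * jacobiP (2 * i - 1) n ((2 * y + z - 1) / (1 - z)) := by
  have hz₀ : 1 - z ≠ 0 := (sub_pos.2 hz).ne'
  have hasDerivAt_arg : HasDerivAt (fun t => (2 * t + z - 1) / (1 - z)) (2 * 1 / (1 - z)) y :=
    ((((hasDerivAt_id y).const_mul 2).add_const z).sub_const 1).div_const (1 - z)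
  have hasDerivAt_vFun := ((hasDerivAt_jacobiPhat_succ (2 * (i : ℝ) - 1) n
    (two_mul_add_sub_one_div_lt_one hz hyz)).comp y hasDerivAt_arg).mul_const ((1 - z) ^ (n + 1))
  refine hasDerivAt_vFun.deriv.trans ?_
  field_simp
  ring

end VFun

theorem face_basis0_normal_trace_general (i n : ℕ) (x y z : ℝ) (hz : z < 1) (hyz : y + z < 1) :
    dot3 (curl3 (fun q => vFun i (n + 1) q • nedelec0 q) (x, y, z)) (0, 0, -1) =
      vFun i (n + 1) (x, y, z) - (1 - y - z) * (1 - z) ^ n *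
        jacobiP (2 * i - 1) n ((2 * y + z - 1) / (1 - z)) := by
  rw [curl3_smul (differentiableAt_vFun_succ i n hz hyz) (differentiable_nedelec0 _),
    curl3_nedelec0, pdx_vFun, pdy_vFun_succ i n hz hyz]
  simp only [dot3, nedelec0, Prod.snd_add, Prod.smul_snd, smul_eq_mul]
  ring

/-- The normal trace of `φ_{0j}` on the bottom face of the reference tetrahedron
(with outer unit normal `(0,0,-1)`) equals `p̂_j^3(2y-1) - (1-y) p_{j-1}^3(2y-1)`. -/
theorem face_basis0_normal_trace (j : ℕ) (hj : 1 ≤ j) (x y : ℝ)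
    (hy0 : 0 < y) (hy1 : y < 1) (hx : |x| < 1 - y) :
    dot3 (phiFace0 j (x, y, 0)) (0, 0, -1)
      = jacobiPhat 3 j (2 * y - 1) - (1 - y) * jacobiP 3 (j - 1) (2 * y - 1) := by
  obtain ⟨n, rfl⟩ := Nat.exists_eq_add_of_le' hj
  have two_mul_two_sub_one : (2 * 2 - 1 : ℝ) = 3 := by norm_num
  simpa [phiFace0, vFun, two_mul_two_sub_one] using
    face_basis0_normal_trace_general 2 n x y 0 one_pos (by simpa using hy1)
end

section
/- On the triangle F, the normal-trace functions of total order exactly k are L²(F)-orthogonal to all polynomials of degree at most k−1: for every integer k ≥ 1, for every pair (i,j) with i ≥ 1, j ≥ 0, i + j = k, and for every polynomial q : ℝ² → ℝ of total degree ≤ k−1, one has ∫_F g_{ij}(x,y) q(x,y) dx dy = 0 and ∫_F h_k(y) q(x,y) dx dy = 0, where g_{ij}(x,y) := p_i^0(x/(1−y)) (1−y)^i p_j^{2i+1}(2y−1) and h_k(y) := p̂_k^3(2y−1) − (1−y) p_{k−1}^3(2y−1). -/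
open MeasureTheory

/-- The triangle `F = {(x,y) : 0 ≤ y ≤ 1, |x| ≤ 1 - y}`. -/
def faceTri : Set (ℝ × ℝ) := {p | 0 ≤ p.2 ∧ p.2 ≤ 1 ∧ |p.1| ≤ 1 - p.2}

/-- The normal-trace function `g_{ij}(x,y) = p_i^0(x/(1-y)) (1-y)^i p_j^{2i+1}(2y-1)`. -/
noncomputable def gFun (i j : ℕ) (p : ℝ × ℝ) : ℝ :=
  jacobiP 0 i (p.1 / (1 - p.2)) * (1 - p.2) ^ i
    * jacobiP (2 * (i : ℝ) + 1) j (2 * p.2 - 1)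

/-- The normal-trace function `h_k(y) = p̂_k^3(2y-1) - (1-y) p_{k-1}^3(2y-1)`. -/
noncomputable def hFun (k : ℕ) (y : ℝ) : ℝ :=
  jacobiPhat 3 k (2 * y - 1) - (1 - y) * jacobiP 3 (k - 1) (2 * y - 1)

/-!
In the collapsed coordinates `u = x / (1 - y)`, `t = 2 y - 1` of the triangle, with Jacobian
`1 - y`, both trace functions are products `A(u) (1 - y)^i B(t)`, where `A` is orthogonal to degree
`< i` for the weight `1` and `B` to degree `< j` for the weight `(1 - t)^(2 i + 1)`. Against a
monomial `x^a y^b` with `a + b < i + j` the integral factors: for `a < i` the `u`-factor vanishes,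
and for `a ≥ i` the `t`-factor does, since `(1 - y)^(1 + i + a) = (1 - y)^(2 i + 1) (1 - y)^(a - i)`
leaves a test polynomial of degree `(a - i) + b < j`.

For `g_{ij}` the factors are Jacobi polynomials. For `h_k` one has `i = 0`, `A = 1`, and
`(1 - t) h_k` is, up to a constant, the derivative of `(1 - t)^2 p̂_k^3`; integrating by parts twice
reduces its orthogonality to that of `p_{k-1}^3`.
-/

open Polynomial

section PolynomialCalculus

theorem degree_derivative_lt_of_degree_lt_succ {R : Type*} [Semiring R] {s : R[X]} {n : ℕ}
    (hs : s.degree < (n + 1 : ℕ)) : (derivative s).degree < n := by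
  rw [degree_lt_iff_coeff_zero] at hs ⊢
  intro m hm
  rw [coeff_derivative, hs (m + 1) (by omega), zero_mul]

theorem exists_derivative_eq_and_eval_eq_zero {K : Type*} [Field K] [CharZero K] (p : K[X])
    (c : K) : ∃ P : K[X], derivative P = p ∧ P.eval c = 0 := by
  suffices ∃ P : K[X], derivative P = p by
    obtain ⟨P, hP⟩ := this
    exact ⟨P - C (P.eval c), by simp [hP], by simp⟩
  induction p using Polynomial.induction_on' with
  | add p q hp hq =>
    obtain ⟨P, rfl⟩ := hp
    obtain ⟨Q, rfl⟩ := hq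
    exact ⟨P + Q, derivative_add⟩
  | monomial n a =>
    refine ⟨monomial (n + 1) (a / (n + 1)), ?_⟩
    have hn : (n : K) + 1 ≠ 0 := n.cast_add_one_ne_zero
    rw [derivative_monomial_succ, div_mul_cancel₀ a hn]

theorem derivative_one_sub_X_pow_succ {R : Type*} [CommRing R] (n : ℕ) :
    derivative ((1 - X : R[X]) ^ (n + 1)) = -(C (n + 1 : R) * (1 - X) ^ n) := by
  simp [derivative_pow]

theorem degree_one_sub_X_pow_mul_X_pow_lt {R : Type*} [Ring R] {a b n : ℕ} (h : a + b < n) :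
    ((1 - X : R[X]) ^ a * X ^ b).degree < (n : WithBot ℕ) := by
  have h_le : ((1 - X : R[X]) ^ a * X ^ b).natDegree ≤ a + b := by compute_degree
  exact (degree_le_of_natDegree_le h_le).trans_lt (by exact_mod_cast h)

theorem iteratedDeriv_eval {𝕜 : Type*} [NontriviallyNormedField 𝕜] (p : 𝕜[X]) (n : ℕ) :
    iteratedDeriv n (fun t => p.eval t) = fun t => (derivative^[n] p).eval t := by
  induction n with
  | zero => simp
  | succ n ih =>
    ext t
    rw [iteratedDeriv_succ, ih, Polynomial.deriv, Function.iterate_succ_apply']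

theorem intervalIntegrable_eval (p : ℝ[X]) (a b : ℝ) :
    IntervalIntegrable (fun x => p.eval x) volume a b :=
  p.continuous.intervalIntegrable a b

theorem integral_eval_C_mul (c : ℝ) (p : ℝ[X]) (a b : ℝ) :
    ∫ x in a..b, (C c * p).eval x = c * ∫ x in a..b, p.eval x := by
  simp only [eval_C_mul, intervalIntegral.integral_const_mul]

theorem integral_eval_derivative_mul (p q : ℝ[X]) (a b : ℝ) :
    ∫ x in a..b, (derivative p * q).eval x =
      (p * q).eval b - (p * q).eval a - ∫ x in a..b, (p * derivative q).eval x := by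
  simp only [eval_mul]
  rw [eq_sub_iff_add_eq, ← intervalIntegral.integral_deriv_mul_eq_sub
      (fun x _ => p.hasDerivAt x) (fun x _ => q.hasDerivAt x)
      (intervalIntegrable_eval _ a b) (intervalIntegrable_eval _ a b),
    intervalIntegral.integral_add]
  · exact (p.derivative.continuous.mul q.continuous).intervalIntegrable a b
  · exact (p.continuous.mul q.derivative.continuous).intervalIntegrable a b

theorem integral_iterate_derivative_mul_eq_zero {a b : ℝ} {n : ℕ} {W s : ℝ[X]}
    (hW : ((X - C a) * (X - C b)) ^ n ∣ W) (hs : s.degree < n) :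
    ∫ x in a..b, (derivative^[n] W * s).eval x = 0 := by
  induction n generalizing s with
  | zero =>
    have hs_zero : s = 0 := by simpa [Nat.WithBot.lt_zero_iff] using hs
    simp [hs_zero]
  | succ n ih =>
    have h_dvd : (X - C a) * (X - C b) ∣ derivative^[n] W := by
      simpa using pow_sub_dvd_iterate_derivative_of_pow_dvd n hW
    obtain ⟨V, hV⟩ := h_dvd
    have h_left : (derivative^[n] W).eval a = 0 := by simp [hV]
    have h_right : (derivative^[n] W).eval b = 0 := by simp [hV]
    rw [Function.iterate_succ_apply', integral_eval_derivative_mul, eval_mul, eval_mul, h_left,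
      h_right, ih ((pow_dvd_pow _ n.le_succ).trans hW)
        (degree_derivative_lt_of_degree_lt_succ hs)]
    ring

end PolynomialCalculus

/-- The polynomial `p` is orthogonal on `[-1, 1]`, for the Jacobi weight `(1 - x) ^ m`, to all
polynomials of degree less than `n`. -/
def JacobiOrthogonal (m n : ℕ) (p : ℝ[X]) : Prop :=
  ∀ s : ℝ[X], s.degree < n → ∫ x in (-1 : ℝ)..1, ((1 - X) ^ m * p * s).eval x = 0

namespace JacobiOrthogonal

variable {m n : ℕ} {p : ℝ[X]}

theorem order_zero (m : ℕ) (p : ℝ[X]) : JacobiOrthogonal m 0 p := by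
  intro s hs
  have hs_zero : s = 0 := by simpa [Nat.WithBot.lt_zero_iff] using hs
  simp [hs_zero]

theorem of_forall_one_sub_X_pow
    (hp : ∀ e < n, ∫ x in (-1 : ℝ)..1, ((1 - X) ^ m * p * (1 - X) ^ e).eval x = 0) :
    JacobiOrthogonal m n p := by
  intro s hs
  have h_expand : (1 - X) ^ m * p * s = ∑ e ∈ (taylor 1 s).support,
      C ((taylor 1 s).coeff e * (-1) ^ e) * ((1 - X) ^ m * p * (1 - X) ^ e) := by
    conv_lhs => rw [← sum_taylor_eq s 1, Polynomial.sum, Finset.mul_sum]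
    refine Finset.sum_congr rfl fun e _ => ?_
    rw [show (X - C 1 : ℝ[X]) = C (-1) * (1 - X) by simp, mul_pow, C_mul, C_pow]
    ring
  simp only [h_expand, eval_finsetSum]
  rw [intervalIntegral.integral_finsetSum fun e _ => intervalIntegrable_eval _ _ _]
  refine Finset.sum_eq_zero fun e he => ?_
  have he_lt : e < n := by
    have := (le_degree_of_mem_supp e he).trans_lt ((degree_taylor s 1).trans_lt hs)
    exact_mod_cast this
  rw [integral_eval_C_mul, hp e he_lt, mul_zero]

theorem of_derivative (hp : JacobiOrthogonal (m + 1) n (derivative p))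
    (hp_left : p.eval (-1) = 0) : JacobiOrthogonal m n p := by
  refine of_forall_one_sub_X_pow fun e he => ?_
  have hme : ((m + e : ℕ) + 1 : ℝ) ≠ 0 := Nat.cast_add_one_ne_zero _
  have h_weight : (1 - X) ^ m * p * (1 - X) ^ e =
      C (-((m + e : ℕ) + 1 : ℝ)⁻¹) * (derivative ((1 - X) ^ (m + e + 1)) * p) := by
    have h_inv : (C ((m + e : ℕ) + 1 : ℝ)⁻¹ * C ((m + e : ℕ) + 1 : ℝ) : ℝ[X]) = 1 := by
      rw [← C_mul, inv_mul_cancel₀ hme, C_1]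
    rw [derivative_one_sub_X_pow_succ, C_neg]
    linear_combination -((1 - X) ^ m * p * (1 - X) ^ e) * h_inv
  have h_orth : ∫ x in (-1 : ℝ)..1, ((1 - X) ^ (m + e + 1) * derivative p).eval x = 0 := by
    rw [← hp _ (degree_one_sub_X_pow_mul_X_pow_lt (b := 0) he)]
    congr! 3
    ring
  rw [h_weight, integral_eval_C_mul, integral_eval_derivative_mul, h_orth]
  simp [hp_left]

theorem sub_one_sub_X_mul_derivative (hp : JacobiOrthogonal (m + 2) n (derivative p))
    (hp_left : p.eval (-1) = 0) :
    JacobiOrthogonal m (n + 1) (p - C (m + 1 : ℝ)⁻¹ * (1 - X) * derivative p) := by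
  intro s hs
  have hm : (m + 1 : ℝ) ≠ 0 := m.cast_add_one_ne_zero
  have h_exact : (1 - X) ^ m * (p - C (m + 1 : ℝ)⁻¹ * (1 - X) * derivative p) * s =
      C (-(m + 1 : ℝ)⁻¹) * (derivative ((1 - X) ^ (m + 1) * p) * s) := by
    have h_inv : (C (m + 1 : ℝ)⁻¹ * C (m + 1 : ℝ) : ℝ[X]) = 1 := by
      rw [← C_mul, inv_mul_cancel₀ hm, C_1]
    rw [derivative_mul, derivative_one_sub_X_pow_succ, C_neg]
    linear_combination -((1 - X) ^ m * p * s) * h_inv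
  have h_orth := of_derivative hp hp_left _ (degree_derivative_lt_of_degree_lt_succ hs)
  rw [h_exact, integral_eval_C_mul, integral_eval_derivative_mul, h_orth]
  simp [hp_left]

theorem integral_zero_one_eq_zero (hp : JacobiOrthogonal m n p) {s : ℝ[X]} (hs : s.degree < n) :
    ∫ y in (0 : ℝ)..1, (1 - y) ^ m * p.eval (2 * y - 1) * s.eval y = 0 := by
  set r : ℝ[X] := s.comp (C (1 / 2) * X + C (1 / 2)) with hr
  have hr_deg : r.degree < n := by
    rcases eq_or_ne s 0 with rfl | hs_ne
    · simp [hr]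
    · refine degree_le_natDegree.trans_lt ?_
      rw [hr, natDegree_comp, natDegree_linear (by norm_num), mul_one,
        ← degree_eq_natDegree hs_ne]
      exact hs
  have h_subst : ∀ y : ℝ, (1 - y) ^ m * p.eval (2 * y - 1) * s.eval y =
      (C ((1 / 2) ^ m) * ((1 - X) ^ m * p * r)).eval (2 * y - 1) := by
    intro y
    have h_pow : (1 - y) ^ m = (1 / 2) ^ m * (1 - (2 * y - 1)) ^ m := by
      rw [← mul_pow]
      ring
    have h_arg : (1 / 2 : ℝ) * (2 * y - 1) + 1 / 2 = y := by ring
    simp only [hr, eval_mul, eval_C, eval_pow, eval_sub, eval_one, eval_X, eval_comp, eval_add,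
      h_arg, h_pow]
    ring
  have h_zero : ∫ x in (-1 : ℝ)..1, (C ((1 / 2) ^ m) * ((1 - X) ^ m * p * r)).eval x = 0 := by
    rw [integral_eval_C_mul, hp r hr_deg, mul_zero]
  have h_change := intervalIntegral.integral_comp_mul_sub (a := 0) (b := 1) (c := (2 : ℝ))
    (fun t : ℝ => (C ((1 / 2) ^ m) * ((1 - X) ^ m * p * r)).eval t) two_ne_zero 1
  simp only [h_subst]
  rw [h_change, show (2 * 0 - 1 : ℝ) = -1 by norm_num, show (2 * 1 - 1 : ℝ) = 1 by norm_num,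
    h_zero, smul_zero]

end JacobiOrthogonal

section JacobiPolynomial

/-- The Jacobi polynomial `p_n^m` as an element of `ℝ[X]`, for a natural number parameter `m`:
the division in Rodrigues' formula is then an exact division of polynomials. -/
noncomputable def jacobiPoly (m n : ℕ) : ℝ[X] :=
  C (1 / (2 ^ n * (n.factorial : ℝ))) *
    (derivative^[n] ((1 - X) ^ m * (X ^ 2 - 1) ^ n) / (1 - X) ^ m)

variable (m n : ℕ)

theorem one_sub_X_pow_mul_jacobiPoly :
    (1 - X) ^ m * jacobiPoly m n = C (1 / (2 ^ n * (n.factorial : ℝ))) *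
      derivative^[n] ((1 - X) ^ m * (X ^ 2 - 1) ^ n) := by
  have h_ne : (1 - X : ℝ[X]) ^ m ≠ 0 := pow_ne_zero _ (sub_ne_zero.2 (X_ne_C 1).symm)
  have h_dvd : (1 - X : ℝ[X]) ^ (m + n) ∣ (1 - X) ^ m * (X ^ 2 - 1) ^ n := by
    rw [pow_add]
    exact mul_dvd_mul_left _ (pow_dvd_pow_of_dvd ⟨-(1 + X), by ring⟩ n)
  have h_dvd_deriv := pow_sub_dvd_iterate_derivative_of_pow_dvd n h_dvd
  rw [Nat.add_sub_cancel] at h_dvd_deriv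
  rw [jacobiPoly, mul_left_comm, EuclideanDomain.mul_div_cancel' h_ne h_dvd_deriv]

theorem jacobiOrthogonal_jacobiPoly : JacobiOrthogonal m n (jacobiPoly m n) := by
  intro s hs
  have h_dvd : ((X - C (-1)) * (X - C 1) : ℝ[X]) ^ n ∣ (1 - X) ^ m * (X ^ 2 - 1) ^ n := by
    rw [show (X - C (-1)) * (X - C 1) = (X ^ 2 - 1 : ℝ[X]) by rw [C_neg, C_1]; ring]
    exact dvd_mul_left _ _
  rw [one_sub_X_pow_mul_jacobiPoly, mul_assoc, integral_eval_C_mul,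
    integral_iterate_derivative_mul_eq_zero h_dvd hs, mul_zero]

theorem jacobiP_eq_eval_jacobiPoly {x : ℝ} (hx : (1 - x) ^ m ≠ 0) :
    jacobiP m n x = (jacobiPoly m n).eval x := by
  have h_rodrigues : (fun t : ℝ => (1 - t) ^ (m : ℝ) * (t ^ 2 - 1) ^ n) =
      fun t => ((1 - X) ^ m * (X ^ 2 - 1) ^ n : ℝ[X]).eval t := by
    ext t
    simp
  have h_eval := congrArg (eval x) (one_sub_X_pow_mul_jacobiPoly m n)
  simp only [eval_mul, eval_pow, eval_sub, eval_one, eval_X, eval_C] at h_eval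
  rw [jacobiP, h_rodrigues, iteratedDeriv_eval, Real.rpow_natCast, ← mul_right_inj' hx, h_eval]
  field_simp

variable {m n}

theorem jacobiPhat_succ_eq_eval {P : ℝ[X]} (hP : derivative P = jacobiPoly m n)
    (hP_left : P.eval (-1) = 0) (x : ℝ) : jacobiPhat m (n + 1) x = P.eval x := by
  have h_ae : ∀ᵐ t : ℝ, jacobiP m n t = (derivative P).eval t := by
    filter_upwards [Measure.ae_ne volume (1 : ℝ)] with t ht
    rw [hP, jacobiP_eq_eval_jacobiPoly m n (pow_ne_zero m (sub_ne_zero.2 ht.symm))]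
  rw [jacobiPhat, if_neg n.succ_ne_zero, Nat.add_sub_cancel,
    intervalIntegral.integral_congr_ae (h_ae.mono fun t ht _ => ht),
    intervalIntegral.integral_eq_sub_of_hasDerivAt (fun t _ => P.hasDerivAt t)
      (intervalIntegrable_eval _ _ _), hP_left, sub_zero]

end JacobiPolynomial

section Duffy

/-- The Duffy map, which collapses the edge `y = 1` of the rectangle `[-1, 1] × [0, 1]` to the
apex of the triangle `faceTri`. -/
def duffyMap (p : ℝ × ℝ) : ℝ × ℝ := ((1 - p.2) * p.1, p.2)

/-- The derivative of `duffyMap` at `p`, given by its Jacobian matrix. -/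
noncomputable def fderivDuffyMap (p : ℝ × ℝ) : ℝ × ℝ →L[ℝ] ℝ × ℝ :=
  (Matrix.toLin (.finTwoProd ℝ) (.finTwoProd ℝ)
    !![1 - p.2, -p.1; 0, 1]).toContinuousLinearMap

theorem hasFDerivAt_duffyMap (p : ℝ × ℝ) : HasFDerivAt duffyMap (fderivDuffyMap p) p := by
  have h_fst : HasFDerivAt (fun p : ℝ × ℝ => (1 - p.2) * p.1) _ p :=
    (hasFDerivAt_snd.const_sub 1).mul (hasFDerivAt_fst (𝕜 := ℝ))
  rw [fderivDuffyMap, Matrix.toLin_finTwoProd_toContinuousLinearMap]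
  convert! h_fst.prodMk hasFDerivAt_snd using 2 <;>
    simp [neg_smul _ (ContinuousLinearMap.snd ℝ ℝ ℝ)]

theorem det_fderivDuffyMap (p : ℝ × ℝ) : (fderivDuffyMap p).det = 1 - p.2 := by
  simp [fderivDuffyMap, LinearMap.det_toContinuousLinearMap, Matrix.det_fin_two_of]

theorem injOn_duffyMap : Set.InjOn duffyMap {p | p.2 ≠ 1} := by
  rintro ⟨u, y⟩ hy ⟨v, z⟩ - h
  obtain ⟨h_fst, rfl⟩ := Prod.mk.inj h
  exact Prod.ext (mul_left_cancel₀ (sub_ne_zero.2 (Ne.symm hy)) h_fst) rfl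

theorem duffyMap_image_prod :
    duffyMap '' (Set.Icc (-1) 1 ×ˢ Set.Ico 0 1) = faceTri \ {(0, 1)} := by
  ext ⟨x, y⟩
  constructor
  · rintro ⟨⟨u, z⟩, ⟨hu, hz⟩, h⟩
    obtain ⟨rfl, rfl⟩ := Prod.mk.inj h
    have hz_pos : 0 < 1 - z := sub_pos.2 hz.2
    refine ⟨⟨hz.1, hz.2.le, ?_⟩, fun h => hz.2.ne (Prod.mk.inj h).2⟩
    rw [abs_mul, abs_of_pos hz_pos]
    exact mul_le_of_le_one_right hz_pos.le (abs_le.2 hu)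
  · rintro ⟨⟨hy0, hy1, hx⟩, h_ne⟩
    have hy_pos : 0 < 1 - y := by
      refine sub_pos.2 (lt_of_le_of_ne hy1 fun hy => h_ne ?_)
      obtain rfl : y = 1 := hy
      simpa using hx
    refine ⟨(x / (1 - y), y), ⟨abs_le.1 ?_, hy0, sub_pos.1 hy_pos⟩, ?_⟩
    · rw [abs_div, abs_of_pos hy_pos]
      exact div_le_one_of_le₀ hx hy_pos.le
    · exact Prod.ext (mul_div_cancel₀ x hy_pos.ne') rfl

theorem setIntegral_faceTri_eq_setIntegral_prod {E : Type*} [NormedAddCommGroup E]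
    [NormedSpace ℝ E] (f : ℝ × ℝ → E) :
    ∫ p in faceTri, f p =
      ∫ p in Set.Icc (-1) 1 ×ˢ Set.Ico 0 1, (1 - p.2) • f (duffyMap p) := by
  have h_meas : MeasurableSet (Set.Icc (-1 : ℝ) 1 ×ˢ Set.Ico (0 : ℝ) 1) :=
    measurableSet_Icc.prod measurableSet_Ico
  have h_inj : Set.InjOn duffyMap (Set.Icc (-1) 1 ×ˢ Set.Ico 0 1) :=
    injOn_duffyMap.mono fun p hp => hp.2.2.ne
  rw [← setIntegral_congr_set (sdiff_null_ae_eq_self (measure_singleton ((0, 1) : ℝ × ℝ))),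
    ← duffyMap_image_prod, integral_image_eq_integral_abs_det_fderiv_smul volume h_meas
      (fun p _ => (hasFDerivAt_duffyMap p).hasFDerivWithinAt) h_inj]
  refine setIntegral_congr_fun h_meas fun p hp => ?_
  rw [det_fderivDuffyMap, abs_of_pos (sub_pos.2 hp.2.2)]

end Duffy

section CollapsedProduct

/-- The product of `A` and `B` in the collapsed coordinates `x / (1 - y)` and `2 * y - 1` of
`faceTri`, with the factor `(1 - y) ^ i` that makes it a polynomial in `(x, y)` when `A` has
degree at most `i`. At `y = 1` the quotient takes the junk value `0`. -/
noncomputable def collapsedProduct (i : ℕ) (A B : ℝ[X]) (p : ℝ × ℝ) : ℝ :=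
  A.eval (p.1 / (1 - p.2)) * (1 - p.2) ^ i * B.eval (2 * p.2 - 1)

variable {i j : ℕ} {A B : ℝ[X]}

theorem collapsedProduct_duffyMap {p : ℝ × ℝ} (hp : p.2 ≠ 1) :
    collapsedProduct i A B (duffyMap p) = A.eval p.1 * (1 - p.2) ^ i * B.eval (2 * p.2 - 1) := by
  rw [collapsedProduct, duffyMap, mul_div_cancel_left₀ _ (sub_ne_zero.2 hp.symm)]

theorem integral_mul_integral_eq_zero_of_jacobiOrthogonal (hA : JacobiOrthogonal 0 i A)
    (hB : JacobiOrthogonal (2 * i + 1) j B) {a b : ℕ} (hab : a + b < i + j) :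
    (∫ x in (-1 : ℝ)..1, A.eval x * x ^ a) *
      ∫ y in (0 : ℝ)..1, (1 - y) ^ (1 + i + a) * B.eval (2 * y - 1) * y ^ b = 0 := by
  rcases lt_or_ge a i with ha | ha
  · have hA_zero := hA (X ^ a) (by rw [degree_X_pow]; exact_mod_cast ha)
    simp only [pow_zero, one_mul, eval_mul, eval_pow, eval_X] at hA_zero
    rw [hA_zero, zero_mul]
  · obtain ⟨c, rfl⟩ := Nat.exists_eq_add_of_le ha
    have hcb : c + b < j := by omega
    have hB_zero := hB.integral_zero_one_eq_zero (degree_one_sub_X_pow_mul_X_pow_lt hcb)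
    simp only [eval_mul, eval_pow, eval_sub, eval_one, eval_X] at hB_zero
    convert! mul_zero _
    convert! hB_zero using 3
    ring

theorem one_sub_mul_collapsedProduct_mul_eval_duffyMap (q : MvPolynomial (Fin 2) ℝ) {p : ℝ × ℝ}
    (hp : p.2 ≠ 1) :
    (1 - p.2) * (collapsedProduct i A B (duffyMap p) *
        MvPolynomial.eval ![(duffyMap p).1, (duffyMap p).2] q) =
      ∑ d ∈ q.support, q.coeff d * ((A.eval p.1 * p.1 ^ d 0) *
        ((1 - p.2) ^ (1 + i + d 0) * B.eval (2 * p.2 - 1) * p.2 ^ d 1)) := by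
  rw [collapsedProduct_duffyMap hp, MvPolynomial.eval_eq', Finset.mul_sum, Finset.mul_sum]
  refine Finset.sum_congr rfl fun d _ => ?_
  simp only [duffyMap, Fin.prod_univ_two, Matrix.cons_val_zero, Matrix.cons_val_one, mul_pow]
  ring

theorem setIntegral_collapsedProduct_mul_eval_eq_zero (hA : JacobiOrthogonal 0 i A)
    (hB : JacobiOrthogonal (2 * i + 1) j B) {q : MvPolynomial (Fin 2) ℝ}
    (hq : q.totalDegree < i + j) :
    ∫ p in faceTri, collapsedProduct i A B p * MvPolynomial.eval ![p.1, p.2] q = 0 := by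
  simp only [setIntegral_faceTri_eq_setIntegral_prod, smul_eq_mul]
  rw [setIntegral_congr_fun (measurableSet_Icc.prod measurableSet_Ico) fun p hp =>
      one_sub_mul_collapsedProduct_mul_eval_duffyMap q hp.2.2.ne,
    integral_finsetSum]
  · refine Finset.sum_eq_zero fun d hd => ?_
    have h_deg : d 0 + d 1 < i + j := by
      have := MvPolynomial.le_totalDegree hd
      rw [Finsupp.sum_fintype _ _ (by simp), Fin.sum_univ_two] at this
      omega
    have h_zero := integral_mul_integral_eq_zero_of_jacobiOrthogonal hA hB h_deg
    rw [intervalIntegral.integral_of_le (by norm_num), intervalIntegral.integral_of_le zero_le_one,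
      ← integral_Icc_eq_integral_Ioc, ← integral_Ico_eq_integral_Ioc] at h_zero
    rw [integral_const_mul, Measure.volume_eq_prod,
      setIntegral_prod_mul (fun u => A.eval u * u ^ d 0)
        (fun y => (1 - y) ^ (1 + i + d 0) * B.eval (2 * y - 1) * y ^ d 1), h_zero, mul_zero]
  · intro d _
    have h_cont : Continuous fun p : ℝ × ℝ => q.coeff d * ((A.eval p.1 * p.1 ^ d 0) *
        ((1 - p.2) ^ (1 + i + d 0) * B.eval (2 * p.2 - 1) * p.2 ^ d 1)) := by
      have := A.continuous
      have := B.continuous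
      fun_prop
    exact (h_cont.continuousOn.integrableOn_compact (isCompact_Icc.prod isCompact_Icc)).mono_set
      (Set.prod_mono_right Set.Ico_subset_Icc_self)

end CollapsedProduct

section NormalTraces

theorem ae_snd_ne_one : ∀ᵐ p : ℝ × ℝ, p.2 ≠ 1 := by
  rw [Measure.volume_eq_prod]
  exact Measure.quasiMeasurePreserving_snd.ae (Measure.ae_ne volume 1)

theorem gFun_eq_collapsedProduct (i j : ℕ) {p : ℝ × ℝ} (hp : p.2 ≠ 1) :
    gFun i j p = collapsedProduct i (jacobiPoly 0 i) (jacobiPoly (2 * i + 1) j) p := by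
  have h_legendre := jacobiP_eq_eval_jacobiPoly 0 i (x := p.1 / (1 - p.2)) (by simp)
  have h_jacobi := jacobiP_eq_eval_jacobiPoly (2 * i + 1) j (x := 2 * p.2 - 1)
    (pow_ne_zero _ fun h => hp (by linarith))
  push_cast at h_legendre h_jacobi
  rw [gFun, collapsedProduct, h_legendre, h_jacobi]

theorem exists_jacobiOrthogonal_hFun_eq_eval (n : ℕ) : ∃ H : ℝ[X],
    JacobiOrthogonal 1 (n + 1) H ∧ ∀ y : ℝ, y ≠ 1 → hFun (n + 1) y = H.eval (2 * y - 1) := by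
  obtain ⟨P, hP, hP_left⟩ := exists_derivative_eq_and_eval_eq_zero (jacobiPoly 3 n) (-1)
  have hP_orth : JacobiOrthogonal (1 + 2) n (derivative P) :=
    hP ▸ jacobiOrthogonal_jacobiPoly 3 n
  refine ⟨_, hP_orth.sub_one_sub_X_mul_derivative hP_left, fun y hy => ?_⟩
  have h_phat := jacobiPhat_succ_eq_eval hP hP_left (2 * y - 1)
  have h_jacobi := jacobiP_eq_eval_jacobiPoly 3 n (x := 2 * y - 1)
    (pow_ne_zero _ fun h => hy (by linarith))
  push_cast at h_phat h_jacobi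
  rw [hFun, h_phat, Nat.add_sub_cancel, h_jacobi, hP]
  simp only [eval_sub, eval_mul, eval_C, eval_one, eval_X]
  push_cast
  ring

theorem setIntegral_gFun_mul_eval_eq_zero (i j : ℕ) {q : MvPolynomial (Fin 2) ℝ}
    (hq : q.totalDegree < i + j) :
    ∫ p in faceTri, gFun i j p * MvPolynomial.eval ![p.1, p.2] q = 0 := by
  rw [← setIntegral_collapsedProduct_mul_eval_eq_zero (jacobiOrthogonal_jacobiPoly 0 i)
    (jacobiOrthogonal_jacobiPoly (2 * i + 1) j) hq]
  refine integral_congr_ae (ae_restrict_of_ae (ae_snd_ne_one.mono fun p hp => ?_))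
  simp only [gFun_eq_collapsedProduct i j hp]

theorem setIntegral_hFun_mul_eval_eq_zero {k : ℕ} {q : MvPolynomial (Fin 2) ℝ}
    (hq : q.totalDegree < k) :
    ∫ p in faceTri, hFun k p.2 * MvPolynomial.eval ![p.1, p.2] q = 0 := by
  obtain ⟨n, rfl⟩ := Nat.exists_eq_succ_of_ne_zero (Nat.ne_zero_of_lt hq)
  obtain ⟨H, hH, hFun_eq⟩ := exists_jacobiOrthogonal_hFun_eq_eval n
  rw [← setIntegral_collapsedProduct_mul_eval_eq_zero (i := 0) (JacobiOrthogonal.order_zero 0 1)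
    hH (hq.trans_eq (zero_add _).symm)]
  refine integral_congr_ae (ae_restrict_of_ae (ae_snd_ne_one.mono fun p hp => ?_))
  simp [hFun_eq p.2 hp, collapsedProduct]

end NormalTraces

/-- The normal-trace functions of total order exactly `k` are `L²(F)`-orthogonal to
all polynomials of total degree at most `k - 1`. -/
theorem top_order_traces_orthogonal (k i j : ℕ) (hk : 1 ≤ k) (hi : 1 ≤ i)
    (hij : i + j = k) (q : MvPolynomial (Fin 2) ℝ) (hq : q.totalDegree ≤ k - 1) :
    (∫ p in faceTri, gFun i j p * MvPolynomial.eval ![p.1, p.2] q = 0) ∧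
      (∫ p in faceTri, hFun k p.2 * MvPolynomial.eval ![p.1, p.2] q = 0) := by
  have hq_lt : q.totalDegree < k := by omega
  exact ⟨setIntegral_gFun_mul_eval_eq_zero i j (hij ▸ hq_lt),
    setIntegral_hFun_mul_eval_eq_zero hq_lt⟩
end
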